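/- arXiv:0707.1223 — 8 statements merged into one kernel-verified Lean document; each statement's English description precedes it below -/
import Mathlib

section
/- Let s and k be positive integers with k+s divisible by 3, gcd(s,3k)=1 and gcd(k,3)=1. Let u be a primitive element of GF(2^{3k}) (a generator of the multiplicative group), and let v, w be elements of the subfield GF(2^k) with v·w ≠ 1. Then the function F : GF(2^{3k}) → GF(2^{3k}) defined by F(x) = u^{2^k}·x^{2^{2k}+2^{k+s}} + u·x^{2^s+1} + v·x^{2^{2k}+1} + w·u^{2^k+1}·x^{2^{k+s}+2^s} is almost perfect nonlinear (APN) on GF(2^{3k}): for every q ≠ 0 and every p in GF(2^{3k}), the equation F(x+q) + F(x) = p has at most 2 solutions x in GF(2^{3k}). -/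
/-- If `P₀, P₁, P₂` and `Q₀, Q₁, Q₂` are vectors of a plane whose mutual products `⟨Pᵢ, Qⱼ⟩` under
the form with Gram matrix `!![v, 1; 1, w]` are symmetric in `i, j`, then the linear relation between
the `Qᵢ` whose coefficients are their cross products also holds between the `Pᵢ`. -/
theorem cross_relation_of_symmetric {L : Type*} [Field L] {v w : L} (hvw : v * w ≠ 1)
    {a₀ a₁ a₂ b₀ b₁ b₂ A₀ A₁ A₂ B₀ B₁ B₂ : L}
    (h₀₁ : a₀ * B₁ + b₀ * A₁ + v * a₀ * A₁ + w * b₀ * B₁ =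
      a₁ * B₀ + b₁ * A₀ + v * a₁ * A₀ + w * b₁ * B₀)
    (h₁₂ : a₁ * B₂ + b₁ * A₂ + v * a₁ * A₂ + w * b₁ * B₂ =
      a₂ * B₁ + b₂ * A₁ + v * a₂ * A₁ + w * b₂ * B₁)
    (h₂₀ : a₂ * B₀ + b₂ * A₀ + v * a₂ * A₀ + w * b₂ * B₀ =
      a₀ * B₂ + b₀ * A₂ + v * a₀ * A₂ + w * b₀ * B₂)
    (hc : A₀ * B₁ - B₀ * A₁ ≠ 0) :
    (A₁ * B₂ - B₁ * A₂) * a₀ + (A₂ * B₀ - B₂ * A₀) * a₁ + (A₀ * B₁ - B₀ * A₁) * a₂ = 0 ∧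
    (A₁ * B₂ - B₁ * A₂) * b₀ + (A₂ * B₀ - B₂ * A₀) * b₁ + (A₀ * B₁ - B₀ * A₁) * b₂ = 0 := by
  set ra := (A₁ * B₂ - B₁ * A₂) * a₀ + (A₂ * B₀ - B₂ * A₀) * a₁ + (A₀ * B₁ - B₀ * A₁) * a₂
    with hra
  set rb := (A₁ * B₂ - B₁ * A₂) * b₀ + (A₂ * B₀ - B₂ * A₀) * b₁ + (A₀ * B₁ - B₀ * A₁) * b₂
    with hrb
  have o₀ : (v * ra + rb) * A₀ + (ra + w * rb) * B₀ = 0 := by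
    rw [hra, hrb]
    linear_combination (A₀ * B₁ - B₀ * A₁) * h₂₀ - (A₂ * B₀ - B₂ * A₀) * h₀₁
  have o₁ : (v * ra + rb) * A₁ + (ra + w * rb) * B₁ = 0 := by
    rw [hra, hrb]
    linear_combination (A₁ * B₂ - B₁ * A₂) * h₀₁ - (A₀ * B₁ - B₀ * A₁) * h₁₂
  have m₀ : v * ra + rb = 0 :=
    (mul_eq_zero.1 (by linear_combination B₁ * o₀ - B₀ * o₁ :
      (A₀ * B₁ - B₀ * A₁) * (v * ra + rb) = 0)).resolve_left hc
  have m₁ : ra + w * rb = 0 :=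
    (mul_eq_zero.1 (by linear_combination A₀ * o₁ - A₁ * o₀ :
      (A₀ * B₁ - B₀ * A₁) * (ra + w * rb) = 0)).resolve_left hc
  have hdet : v * w - 1 ≠ 0 := sub_ne_zero.2 hvw
  exact ⟨(mul_eq_zero.1 (by linear_combination w * m₀ - m₁ :
      (v * w - 1) * ra = 0)).resolve_left hdet,
    (mul_eq_zero.1 (by linear_combination v * m₁ - m₀ :
      (v * w - 1) * rb = 0)).resolve_left hdet⟩

/-- The symmetric bilinear form attached to the quadrinomial, with `σ` and `τ` in place of the
Frobenius powers, has `x * q` orthogonal to `q` only for `x ∈ {0, 1}`. -/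
theorem eq_zero_or_one_of_polar_eq {L : Type*} [Field L] (σ τ : L →+* L)
    (hσ : ∀ x, σ (σ (σ x)) = x) (hστ : ∀ x, τ (σ x) = σ (τ x)) {u v w : L}
    (hv : σ v = v) (hw : σ w = w) (hvw : v * w ≠ 1) (hu : u ≠ 0)
    (hcross : ∀ q, q ≠ 0 → σ u * σ (σ q) * σ (τ q) ≠ u * q * τ q)
    (htwist : ∀ c ν, c ≠ 0 → σ ν = ν → τ (σ c) ≠ ν * (c * u))
    (hfix : ∀ x, τ x = x → x = 0 ∨ x = 1)
    {q x : L} (hq : q ≠ 0)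
    (h : σ (σ (x * q)) * (σ u * σ (τ q)) + u * τ (x * q) * q + v * σ (σ (x * q)) * q
        + w * (u * τ (x * q)) * (σ u * σ (τ q)) =
      (x * q) * (u * τ q) + σ u * σ (τ (x * q)) * σ (σ q) + v * (x * q) * σ (σ q)
        + w * (σ u * σ (τ (x * q))) * (u * τ q)) :
    x = 0 ∨ x = 1 := by
  have h' := congrArg σ h
  have h'' := congrArg σ h'
  simp only [map_add, map_mul, hσ, hv, hw] at h h' h''
  set c := q * (σ (σ u) * σ (σ (τ q))) - σ u * σ (τ q) * σ q with hc
  have hc' : σ c = σ q * (u * τ q) - σ (σ u) * σ (σ (τ q)) * σ (σ q) := by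
    simp only [hc, map_sub, map_mul, hσ]
  have hc'' : σ (σ c) = σ (σ q) * (σ u * σ (τ q)) - u * τ q * q := by
    simp only [hc', map_sub, map_mul, hσ]
  have hc2 : σ (σ c) ≠ 0 := by
    rw [hc'']
    intro h0
    exact hcross q hq (by linear_combination h0)
  have hc0 : c ≠ 0 := by
    intro h0
    exact hc2 (by rw [h0, map_zero, map_zero])
  obtain ⟨ra, rb⟩ := cross_relation_of_symmetric (v := v) (w := w) hvw
    (a₀ := σ (σ x) * σ (σ q)) (a₁ := x * q) (a₂ := σ x * σ q)
    (b₀ := u * (τ x * τ q)) (b₁ := σ u * (σ (τ x) * σ (τ q)))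
    (b₂ := σ (σ u) * (σ (σ (τ x)) * σ (σ (τ q))))
    (A₀ := σ (σ q)) (A₁ := q) (A₂ := σ q)
    (B₀ := u * τ q) (B₁ := σ u * σ (τ q)) (B₂ := σ (σ u) * σ (σ (τ q)))
    h h' h'' (by rwa [hc''] at hc2)
  have hτq : τ q ≠ 0 := by simpa using hq
  have hσq : σ (σ q) ≠ 0 := by simpa using hq
  have hd : c * σ (σ q) ≠ 0 := mul_ne_zero hc0 hσq
  have he : c * (u * τ q) ≠ 0 := mul_ne_zero hc0 (mul_ne_zero hu hτq)
  have hσd : σ (c * σ (σ q)) = σ c * q := by rw [map_mul, hσ]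
  have hσd0 : σ c * q ≠ 0 := by rw [← hσd]; simpa using hd
  have hσe : σ (c * (u * τ q)) = σ c * (σ u * σ (τ q)) := by simp only [map_mul]
  have hσe0 : σ c * (σ u * σ (τ q)) ≠ 0 := by rw [← hσe]; simpa using he
  have hx : σ x = x := by
    by_contra hne
    have ht : x - σ x ≠ 0 := fun h0 => hne (sub_eq_zero.1 h0).symm
    have hl : σ ((x - σ x) / (c * σ (σ q))) = (x - σ x) / (c * σ (σ q)) := by
      rw [map_div₀, hσd, div_eq_div_iff hσd0 hd, map_sub, hc', hc]
      linear_combination -ra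
    have hm : σ ((σ (τ x) - σ (σ (τ x))) / (c * (u * τ q))) =
        (σ (τ x) - σ (σ (τ x))) / (c * (u * τ q)) := by
      rw [map_div₀, hσe, div_eq_div_iff hσe0 he, map_sub, hσ, hc', hc]
      linear_combination -rb
    set l := (x - σ x) / (c * σ (σ q)) with hldef
    set m := (σ (τ x) - σ (σ (τ x))) / (c * (u * τ q)) with hmdef
    have hl0 : l ≠ 0 := div_ne_zero ht hd
    have hτl : τ l ≠ 0 := by simpa using hl0
    have hxl : x - σ x = l * (c * σ (σ q)) := by rw [hldef, div_mul_cancel₀ _ hd]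
    have hxm : σ (τ x) - σ (σ (τ x)) = m * (c * (u * τ q)) := by
      rw [hmdef, div_mul_cancel₀ _ he]
    have hτ : σ (τ x) - σ (σ (τ x)) = τ l * (τ (σ c) * τ q) := by
      have := congrArg (fun z => τ (σ z)) hxl
      simpa only [map_sub, map_mul, hσ, hστ, hl] using this
    refine htwist c (m / τ l) hc0 ?_ ?_
    · rw [map_div₀, hm, ← hστ, hl]
    · rw [div_mul_eq_mul_div, eq_div_iff hτl]
      apply mul_right_cancel₀ hτq
      linear_combination hxm - hτ
  have hτx : σ (τ x) = τ x := by rw [← hστ, hx]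
  apply hfix
  rw [hx, hx, hτx] at h
  have : σ (σ c) * (x - τ x) = 0 := by
    rw [hc'']
    linear_combination h
  exact (sub_eq_zero.1 ((mul_eq_zero.1 this).resolve_left hc2)).symm

/-- The residue of `2 ^ n` modulo `7` is determined by `n` modulo `3`. -/
theorem two_pow_modEq_seven (n : ℕ) : 2 ^ n ≡ 2 ^ (n % 3) [MOD 7] := by
  conv_lhs => rw [← Nat.div_add_mod n 3, pow_add, pow_mul]
  simpa using ((show 2 ^ 3 ≡ 1 [MOD 7] from rfl).pow (n / 3)).mul_right (2 ^ (n % 3))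

theorem pow_two_pow_eq_of_pow_seven {M : Type*} [Monoid M] {a : M} (ha : a ^ 7 = 1) (n : ℕ) :
    a ^ 2 ^ n = a ^ 2 ^ (n % 3) := by
  rw [pow_eq_pow_mod _ ha, two_pow_modEq_seven n, ← pow_eq_pow_mod _ ha]

/-- The quadrinomial
`F(x) = u^{2^k} x^{2^{2k}+2^{k+s}} + u x^{2^s+1} + v x^{2^{2k}+1} + w u^{2^k+1} x^{2^{k+s}+2^s}`
is APN on `GF(2^{3k})` when `3 ∣ k+s`, `gcd(s,3k) = 1`, `gcd(k,3) = 1`, `u` is a primitive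
element, and `v, w` lie in the subfield `GF(2^k)` with `v·w ≠ 1`. -/
theorem quadrinomial_is_APN
    (s k : ℕ) (hs : 0 < s) (hk : 0 < k)
    (h3 : 3 ∣ (k + s)) (hsk : Nat.gcd s (3 * k) = 1) (hk3 : Nat.gcd k 3 = 1)
    (u v w : GaloisField 2 (3 * k))
    (hu : ∀ x : GaloisField 2 (3 * k), x ≠ 0 → ∃ m : ℕ, x = u ^ m)
    (hv : v ^ (2 ^ k) = v) (hw : w ^ (2 ^ k) = w)
    (hvw : v * w ≠ 1)
    (F : GaloisField 2 (3 * k) → GaloisField 2 (3 * k))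
    (hF : ∀ x, F x = u ^ (2 ^ k) * x ^ (2 ^ (2 * k) + 2 ^ (k + s))
        + u * x ^ (2 ^ s + 1) + v * x ^ (2 ^ (2 * k) + 1)
        + w * u ^ (2 ^ k + 1) * x ^ (2 ^ (k + s) + 2 ^ s)) :
    ∀ p q : GaloisField 2 (3 * k), q ≠ 0 →
      {x : GaloisField 2 (3 * k) | F (x + q) + F x = p}.ncard ≤ 2 := by
  have hk0 : 3 * k ≠ 0 := by omega
  have hcard : Nat.card (GaloisField 2 (3 * k)) = 2 ^ (3 * k) := GaloisField.card 2 _ hk0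
  let _ : Fintype (GaloisField 2 (3 * k)) := Fintype.ofFinite _
  have hfc : Fintype.card (GaloisField 2 (3 * k)) = 2 ^ (3 * k) := by
    rw [← Nat.card_eq_fintype_card, hcard]
  have hfrob : ∀ x : GaloisField 2 (3 * k), x ^ 2 ^ (3 * k) = x := fun x => by
    rw [← hfc, FiniteField.pow_card]
  have hone : ∀ x : GaloisField 2 (3 * k), x ≠ 0 → x ^ (2 ^ (3 * k) - 1) = 1 := fun x hx => by
    rw [← hfc, FiniteField.pow_card_sub_one_eq_one x hx]
  have hkmod : k % 3 = 1 ∧ s % 3 = 2 ∨ k % 3 = 2 ∧ s % 3 = 1 := by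
    have : ¬ 3 ∣ k := fun h => by
      have := Nat.dvd_gcd h (dvd_refl 3)
      omega
    omega
  obtain ⟨N, hN⟩ : 7 ∣ 2 ^ (2 * k) + 2 ^ k + 1 := by
    rw [Nat.dvd_iff_mod_eq_zero]
    have h1 : 2 ^ k % 7 = 2 ^ (k % 3) % 7 := two_pow_modEq_seven k
    rw [mul_comm 2 k, pow_mul]
    rcases hkmod with ⟨h, -⟩ | ⟨h, -⟩ <;> rw [h] at h1 <;>
      norm_num [Nat.add_mod, Nat.pow_mod, h1]
  obtain ⟨j, hj⟩ : 7 ∣ 2 ^ (k + s) - 1 := by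
    have h := two_pow_modEq_seven (k + s)
    rw [Nat.mod_eq_zero_of_dvd h3, pow_zero] at h
    exact (Nat.modEq_iff_dvd' Nat.one_le_two_pow).1 h.symm
  have hN7 : 2 ^ (3 * k) - 1 = (2 ^ k - 1) * N * 7 := by
    have h1 : 1 ≤ 2 ^ k := Nat.one_le_two_pow
    have h2 : 1 ≤ 2 ^ (3 * k) := Nat.one_le_two_pow
    have h3 : ((2 ^ (2 * k) + 2 ^ k + 1 : ℕ) : ℤ) = 7 * N := by exact_mod_cast hN
    zify [h1, h2]
    push_cast at h3
    linear_combination ((2 : ℤ) ^ k - 1) * h3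
  set E := (2 ^ k - 1) * N with hE
  have hE7 : ∀ x : GaloisField 2 (3 * k), x ≠ 0 → (x ^ E) ^ 7 = 1 := fun x hx => by
    rw [← pow_mul, ← hN7, hone x hx]
  have hE0 : 0 < E := by
    have : 2 ^ 3 ≤ 2 ^ (3 * k) := Nat.pow_le_pow_right (by norm_num) (by omega)
    omega
  obtain ⟨g, hg0, hgE⟩ : ∃ g : GaloisField 2 (3 * k), g ≠ 0 ∧ g ^ E ≠ 1 := by
    obtain ⟨g, hg⟩ := IsCyclic.exists_ofOrder_eq_natCard (α := (GaloisField 2 (3 * k))ˣ)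
    refine ⟨g, g.ne_zero, fun h => ?_⟩
    have hd : orderOf g ∣ E := orderOf_dvd_of_pow_eq_one (Units.ext (by simpa using h))
    rw [hg, Nat.card_units, hcard, hN7] at hd
    have := Nat.le_of_dvd hE0 hd
    omega
  obtain ⟨m, rfl⟩ := hu g hg0
  have huE : u ^ E ≠ 1 := fun h => hgE (by rw [pow_right_comm, h, one_pow])
  have hu0 : u ≠ 0 := by
    rintro rfl
    rcases eq_or_ne m 0 with rfl | hm
    · simp at hgE
    · exact hg0 (zero_pow hm)
  set σ := iterateFrobenius (GaloisField 2 (3 * k)) 2 k with hσdef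
  set τ := iterateFrobenius (GaloisField 2 (3 * k)) 2 s with hτdef
  have hσa : ∀ x, σ x = x ^ 2 ^ k := fun x => iterateFrobenius_def ..
  have hτa : ∀ x, τ x = x ^ 2 ^ s := fun x => iterateFrobenius_def ..
  have hfixE : ∀ ν, ν ≠ 0 → σ ν = ν → ν ^ E = 1 := fun ν h0 h => by
    have h1 : ν ^ (2 ^ k - 1) = 1 := by
      rw [pow_sub₀ _ h0 Nat.one_le_two_pow, ← hσa, h, pow_one, mul_inv_cancel₀ h0]
    rw [hE, pow_mul, h1, one_pow]
  have key := @eq_zero_or_one_of_polar_eq _ _ σ τ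
    (fun x => by
      simp only [hσa, ← pow_mul]
      rw [← pow_add, ← pow_add, show k + k + k = 3 * k by ring]
      exact hfrob x)
    (fun x => by simp only [hσa, hτa, ← pow_mul, mul_comm])
    u v w (by rw [hσa, hv]) (by rw [hσa, hw]) hvw hu0
    (fun q hq h => by
      have hχ := congrArg (· ^ E) h
      simp only [hσa, hτa, mul_pow, pow_right_comm _ _ E] at hχ
      have ha := hE7 u hu0
      have hb := hE7 q hq
      have ha0 : u ^ E ≠ 0 := pow_ne_zero _ hu0
      have hb0 : q ^ E ≠ 0 := pow_ne_zero _ hq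
      generalize u ^ E = a at *
      generalize q ^ E = b at *
      rw [← pow_mul b, ← pow_mul b, ← pow_add, ← pow_add, pow_two_pow_eq_of_pow_seven ha,
        pow_two_pow_eq_of_pow_seven hb (k + k), pow_two_pow_eq_of_pow_seven hb (s + k),
        pow_two_pow_eq_of_pow_seven hb s] at hχ
      rcases hkmod with ⟨h1, h2⟩ | ⟨h1, h2⟩
      · rw [show (k + k) % 3 = 2 by omega, show (s + k) % 3 = 0 by omega, h1, h2] at hχ
        apply huE
        apply mul_left_cancel₀ (mul_ne_zero ha0 (pow_ne_zero 5 hb0))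
        linear_combination hχ
      · rw [show (k + k) % 3 = 1 by omega, show (s + k) % 3 = 0 by omega, h1, h2] at hχ
        have h3 : a ^ 3 = 1 := by
          apply mul_left_cancel₀ (mul_ne_zero ha0 (pow_ne_zero 3 hb0))
          linear_combination hχ
        apply huE
        linear_combination ha - a * (a ^ 3 + 1) * h3)
    (fun c ν hc hν h => by
      have hc' : τ (σ c) = c * (c ^ j) ^ 7 := by
        rw [hσa, hτa, ← pow_mul, ← pow_mul, ← pow_add, mul_comm j, ← hj, ← pow_succ',
          Nat.sub_add_cancel Nat.one_le_two_pow]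
      have hν0 : ν ≠ 0 := by
        rintro rfl
        rw [zero_mul] at h
        exact hc (by simpa using h)
      have h1 : (c ^ j) ^ 7 = ν * u :=
        mul_left_cancel₀ hc (by linear_combination h - hc')
      have h2 := congrArg (· ^ E) h1
      simp only [mul_pow, hfixE ν hν0 hν, one_mul, pow_right_comm _ 7 E,
        hE7 _ (pow_ne_zero j hc)] at h2
      exact huE h2.symm)
    (fun x hx => by
      rcases eq_or_ne x 0 with h0 | h0
      · exact Or.inl h0
      right
      have h1 : x ^ (2 ^ s - 1) = 1 := by
        rw [pow_sub₀ _ h0 Nat.one_le_two_pow, ← hτa, hx, pow_one, mul_inv_cancel₀ h0]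
      have h2 := pow_gcd_eq_one.2 ⟨h1, hone x h0⟩
      rw [Nat.pow_sub_one_gcd_pow_sub_one, hsk] at h2
      simpa using h2)
  have hG : ∀ x, F x = σ u * (σ (σ x) * σ (τ x)) + u * (τ x * x) + v * (σ (σ x) * x)
      + w * (σ u * u) * (σ (τ x) * τ x) := fun x => by
    rw [hF]
    simp only [hσa, hτa]
    ring
  intro p q hq
  rcases Set.eq_empty_or_nonempty {x | F (x + q) + F x = p} with h0 | ⟨y, hy⟩
  · simp [h0]
  refine (Set.ncard_le_ncard (t := {y, y + q}) ?_).trans (Set.ncard_insert_le _ _ |>.trans (by simp))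
  intro x hx
  have hxy : F (x + q) - F x = F (y + q) - F y := by
    rw [CharTwo.sub_eq_add, CharTwo.sub_eq_add]
    exact hx.trans hy.symm
  have hz : (x - y) / q * q = x - y := div_mul_cancel₀ _ hq
  rcases key (q := q) (x := (x - y) / q) hq (by
    rw [hz, ← CharTwo.add_eq_zero]
    simp only [hG, map_add, map_sub] at hxy ⊢
    linear_combination hxy) with h | h
  · left
    rw [h, zero_mul] at hz
    exact sub_eq_zero.1 hz.symm
  · right
    rw [h, one_mul] at hz
    exact (sub_eq_iff_eq_add'.1 hz.symm)
end

section
/- Let s and k be positive integers with k+s divisible by 3, gcd(s,3k)=1 and gcd(k,3)=1, let u be a primitive element of GF(2^{3k}), and let v be an element of the subfield GF(2^k). Then for every nonzero q in GF(2^{3k}), A := v·q^{2^{2k}+1} + u·q^{2^s+1} ≠ 0. -/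
theorem two_pow_mod_seven (n : ℕ) : 2 ^ n % 7 = 2 ^ (n % 3) % 7 := by
  conv_lhs => rw [← Nat.div_add_mod n 3, pow_add, pow_mul, Nat.mul_mod, Nat.pow_mod]
  simp

theorem seven_dvd_two_pow_sq_add_two_pow_add_one {k : ℕ} (hk : k % 3 ≠ 0) :
    7 ∣ (2 ^ k) ^ 2 + 2 ^ k + 1 := by
  have h := two_pow_mod_seven k
  have hk' : k % 3 = 1 ∨ k % 3 = 2 := by lia
  rcases hk' with h' | h' <;> rw [h'] at h <;>
    simp [Nat.dvd_iff_mod_eq_zero, Nat.add_mod, Nat.pow_mod, h]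

/-- The coefficient `A = v q^{2^{2k}+1} + u q^{2^s+1}` never vanishes for nonzero `q`. -/
theorem coefficient_A_ne_zero (s k : ℕ) (hs : 0 < s) (hk : 0 < k)
    (h3 : 3 ∣ (k + s)) (hsk : Nat.gcd s (3 * k) = 1) (hk3 : Nat.gcd k 3 = 1)
    (u v : GaloisField 2 (3 * k))
    (hu : ∀ x : GaloisField 2 (3 * k), x ≠ 0 → ∃ m : ℕ, x = u ^ m)
    (hv : v ^ (2 ^ k) = v) :
    ∀ q : GaloisField 2 (3 * k), q ≠ 0 →
      v * q ^ (2 ^ (2 * k) + 1) + u * q ^ (2 ^ s + 1) ≠ 0 := by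
  intro q hq hA
  have hkmod : k % 3 ≠ 0 := by
    intro h
    rw [Nat.gcd_eq_right (Nat.dvd_of_mod_eq_zero h)] at hk3
    lia
  obtain ⟨c, hc⟩ := seven_dvd_two_pow_sq_add_two_pow_add_one hkmod
  obtain ⟨d, hd⟩ : ∃ d, 2 ^ k = d + 1 := ⟨2 ^ k - 1, by have := Nat.one_le_two_pow (n := k); lia⟩
  have hd0 : 0 < d := by
    have := Nat.one_lt_two_pow hk.ne'
    lia
  have hc0 : 0 < c := by
    rcases Nat.eq_zero_or_pos c with rfl | h
    · simp at hc
    · exact h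
  have hcard : Nat.card (GaloisField 2 (3 * k))ˣ = 7 * (d * c) := by
    rw [Nat.card_units, GaloisField.card 2 (3 * k) (by lia), mul_comm 3 k, pow_mul]
    rw [hd] at hc ⊢
    have : (d + 1) ^ 3 = 7 * (d * c) + 1 := by linear_combination d * hc
    rw [this, Nat.add_sub_cancel]
  have hvq : v * q ^ 2 ^ (2 * k) = u * q ^ 2 ^ s := by
    have h : (v * q ^ 2 ^ (2 * k) + u * q ^ 2 ^ s) * q = 0 := by
      rw [← hA]
      ring
    exact CharTwo.add_eq_zero.mp ((mul_eq_zero.mp h).resolve_right hq)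
  have hu0 : u ≠ 0 := by
    rintro rfl
    rcases mul_eq_zero.mp (hvq.trans (zero_mul _)) with rfl | h
    · have hone (y : (GaloisField 2 (3 * k))ˣ) : y = 1 := by
        obtain ⟨m, hm⟩ := hu y y.ne_zero
        rcases Nat.eq_zero_or_pos m with rfl | h
        · exact Units.ext (by simpa using hm)
        · exact absurd (hm.trans (zero_pow h.ne')) y.ne_zero
      have : Subsingleton (GaloisField 2 (3 * k))ˣ :=
        ⟨fun a b => (hone a).trans (hone b).symm⟩
      have := Finite.card_le_one_iff_subsingleton.mpr this
      have := Nat.mul_pos hd0 hc0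
      lia
    · exact pow_ne_zero _ hq h
  have hv0 : v ≠ 0 := by
    rintro rfl
    exact mul_ne_zero hu0 (pow_ne_zero _ hq) (hvq.symm.trans (zero_mul _))
  have hve : v ^ (d * c) = 1 := by
    rw [hd, pow_succ] at hv
    rw [pow_mul, mul_right_cancel₀ hv0 (hv.trans (one_mul v).symm), one_pow]
  have hqe : (q ^ (d * c)) ^ 7 = 1 := by
    rw [← pow_mul, mul_comm (d * c), ← hcard]
    exact congrArg Units.val (pow_card_eq_one' (x := Units.mk0 q hq))
  have hmod : 2 ^ (2 * k) % 7 = 2 ^ s % 7 := by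
    rw [two_pow_mod_seven (2 * k), two_pow_mod_seven s]
    congr 2
    lia
  have hue : u ^ (d * c) = 1 := by
    have h := congrArg (· ^ (d * c)) hvq
    simp only [mul_pow, hve, one_mul] at h
    rw [pow_right_comm q, pow_right_comm q (2 ^ s), pow_eq_pow_mod _ hqe,
      pow_eq_pow_mod (2 ^ s) hqe, hmod] at h
    exact mul_right_cancel₀ (pow_ne_zero _ (pow_ne_zero _ hq)) (h.symm.trans (one_mul _).symm)
  have hdvd : Monoid.exponent (GaloisField 2 (3 * k))ˣ ∣ d * c := by
    refine Monoid.exponent_dvd_of_forall_pow_eq_one fun x => Units.ext ?_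
    obtain ⟨m, hm⟩ := hu x x.ne_zero
    rw [Units.val_pow_eq_pow_val, hm, pow_right_comm, hue, one_pow, Units.val_one]
  rw [IsCyclic.exponent_eq_card, hcard] at hdvd
  have := Nat.le_of_dvd (Nat.mul_pos hd0 hc0) hdvd
  have := Nat.mul_pos hd0 hc0
  lia
end

section
/- Let s and k be positive integers with k+s divisible by 3, gcd(s,3k)=1 and gcd(k,3)=1, let u be a primitive element of GF(2^{3k}), and let v be an element of the subfield GF(2^k). Then for every nonzero q in GF(2^{3k}), B := v·q^{2^{2k}+1} + u^{2^k}·q^{2^{2k}+2^{k+s}} ≠ 0. -/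
theorem two_pow_three_mul_mod_seven (j : ℕ) : 2 ^ (3 * j) % 7 = 1 := by
  rw [pow_mul, Nat.pow_mod]
  simp

theorem seven_dvd_two_pow_two_mul_add {k : ℕ} (hk : Nat.gcd k 3 = 1) :
    7 ∣ 2 ^ (2 * k) + 2 ^ k + 1 := by
  have hmod := two_pow_three_mul_mod_seven (k / 3)
  have hk0 : k % 3 ≠ 0 := fun h => by
    rw [Nat.gcd_eq_right (Nat.dvd_of_mod_eq_zero h)] at hk
    omega
  have hsq : 2 ^ (2 * k) = 2 ^ k * 2 ^ k := by rw [two_mul, pow_add]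
  have hcases : k = 3 * (k / 3) + 1 ∨ k = 3 * (k / 3) + 2 := by omega
  have h : 2 ^ k % 7 = 2 ∨ 2 ^ k % 7 = 4 := by
    rcases hcases with h | h <;> rw [h, pow_add] <;> omega
  rw [hsq]
  rcases h with h | h <;> simp [Nat.dvd_iff_mod_eq_zero, Nat.add_mod, Nat.mul_mod, h]

/-- If every nonzero element of a finite field is a power of `u`, then every exponent
annihilating `u` is a multiple of the order of the unit group. -/
theorem natCard_units_dvd_of_pow_eq_one {F : Type*} [Field F] [Finite F] {u : F}
    (hu : ∀ x : F, x ≠ 0 → ∃ m : ℕ, x = u ^ m) {n : ℕ} (hn : u ^ n = 1) :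
    Nat.card Fˣ ∣ n := by
  obtain ⟨g, hg⟩ := IsCyclic.exists_ofOrder_eq_natCard (α := Fˣ)
  obtain ⟨m, hm⟩ := hu g g.ne_zero
  rw [← hg, orderOf_dvd_iff_pow_eq_one, Units.ext_iff, Units.val_pow_eq_pow_val, hm,
    ← pow_mul, mul_comm, pow_mul, hn, one_pow, Units.val_one]

/-- The coefficient `B = v q^{2^{2k}+1} + u^{2^k} q^{2^{2k}+2^{k+s}}` never vanishes
for nonzero `q`. -/
theorem coefficient_B_ne_zero (s k : ℕ) (hs : 0 < s) (hk : 0 < k)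
    (h3 : 3 ∣ (k + s)) (hsk : Nat.gcd s (3 * k) = 1) (hk3 : Nat.gcd k 3 = 1)
    (u v : GaloisField 2 (3 * k))
    (hu : ∀ x : GaloisField 2 (3 * k), x ≠ 0 → ∃ m : ℕ, x = u ^ m)
    (hv : v ^ (2 ^ k) = v) :
    ∀ q : GaloisField 2 (3 * k), q ≠ 0 →
      v * q ^ (2 ^ (2 * k) + 1) + u ^ (2 ^ k) * q ^ (2 ^ (2 * k) + 2 ^ (k + s)) ≠ 0 := by
  intro q hq hB
  have hcard : Nat.card (GaloisField 2 (3 * k))ˣ = 2 ^ (3 * k) - 1 := by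
    rw [Nat.card_units, GaloisField.card 2 (3 * k) (by omega)]
  have hge : 8 ≤ 2 ^ (3 * k) :=
    Nat.pow_le_pow_right (n := 2) (by norm_num) (show 3 ≤ 3 * k by omega)
  have hu0 : u ≠ 0 := by
    rintro rfl
    obtain ⟨g, hg⟩ := IsCyclic.exists_ofOrder_eq_natCard (α := (GaloisField 2 (3 * k))ˣ)
    obtain ⟨m, hm⟩ := hu g g.ne_zero
    rcases m with _ | m
    · have : g = 1 := Units.ext (by simpa using hm)
      rw [this, orderOf_one] at hg
      omega
    · simp at hm
  obtain ⟨M, hM⟩ := seven_dvd_two_pow_two_mul_add hk3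
  obtain ⟨a, ha⟩ : ∃ a, 2 ^ k = a + 1 := ⟨2 ^ k - 1, by have := Nat.one_le_two_pow (n := k); omega⟩
  obtain ⟨b, hb⟩ : ∃ b, 2 ^ (k + s) = 7 * b + 1 := by
    obtain ⟨j, hj⟩ := h3
    have := two_pow_three_mul_mod_seven j
    exact ⟨2 ^ (k + s) / 7, by rw [hj]; omega⟩
  have hN : 2 ^ (3 * k) - 1 = 7 * (a * M) := by
    have h1 : 2 ^ (3 * k) = 2 ^ k * 2 ^ k * 2 ^ k := by rw [← pow_add, ← pow_add]; congr 1; ring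
    have h2 : 2 ^ (2 * k) = 2 ^ k * 2 ^ k := by rw [two_mul, pow_add]
    have h3 : 2 ^ (3 * k) = 7 * (a * M) + 1 := by
      rw [h2, ha] at hM
      rw [h1, ha]
      linear_combination a * hM
    omega
  have hpow (x : GaloisField 2 (3 * k)) (hx : x ≠ 0) : x ^ (7 * (a * M)) = 1 := by
    have h := pow_card_eq_one' (x := Units.mk0 x hx)
    rw [hcard, hN] at h
    simpa using congrArg Units.val h
  have hvq : v = u ^ (2 ^ k) * q ^ (7 * b) := by
    have h := CharTwo.add_eq_zero.mp hB
    rw [hb] at h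
    refine mul_right_cancel₀ (pow_ne_zero (2 ^ (2 * k) + 1) hq) (h.trans ?_)
    ring
  have hv0 : v ≠ 0 := by
    rw [hvq]
    exact mul_ne_zero (pow_ne_zero _ hu0) (pow_ne_zero _ hq)
  have hva : v ^ a = 1 := by
    rw [ha, pow_succ] at hv
    exact mul_right_cancel₀ hv0 (by rw [hv, one_mul])
  have huN : u ^ (2 ^ k * (a * M)) = 1 := by
    have h : v ^ (a * M) = 1 := by rw [pow_mul, hva, one_pow]
    rwa [hvq, mul_pow, ← pow_mul, ← pow_mul,
      show 7 * b * (a * M) = 7 * (a * M) * b by ring, pow_mul q, hpow q hq, one_pow,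
      mul_one] at h
  have hdvd := natCard_units_dvd_of_pow_eq_one hu huN
  have hcop : Nat.Coprime (7 * (a * M)) (2 ^ k) := by
    refine Nat.Coprime.pow_right _ (Nat.coprime_two_right.mpr ?_)
    have : 2 ∣ 2 ^ (3 * k) := dvd_pow_self 2 (by omega)
    rw [Nat.odd_iff]
    omega
  rw [hcard, hN] at hdvd
  have hle := Nat.le_of_dvd (by omega) (hcop.dvd_of_dvd_mul_left hdvd)
  omega
end

section
/- Let s and k be positive integers with k+s divisible by 3, gcd(s,3k)=1 and gcd(k,3)=1, let u be a primitive element of GF(2^{3k}), and let w be an element of the subfield GF(2^k). Then for every nonzero q in GF(2^{3k}), C := w·u^{2^k+1}·q^{2^{k+s}+2^s} + u·q^{2^s+1} ≠ 0. -/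
/-- If `3 ∤ k`, then `7 (2^k - 1)` divides `2^(3k) - 1`. -/
theorem exists_two_pow_three_mul_eq (k : ℕ) (hk3 : Nat.gcd k 3 = 1) :
    ∃ M : ℕ, 2 ^ (3 * k) = 7 * ((2 ^ k - 1) * M) + 1 := by
  have hmod : 7 ∣ (2 ^ k) ^ 2 + 2 ^ k + 1 := by
    have hne : k % 3 ≠ 0 := fun h => by
      rw [Nat.gcd_eq_right (Nat.dvd_of_mod_eq_zero h)] at hk3
      omega
    have h8 : 2 ^ k % 7 = 2 ^ (k % 3) % 7 := by
      conv_lhs => rw [← Nat.div_add_mod k 3, pow_add, pow_mul, Nat.mul_mod, Nat.pow_mod]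
      norm_num
    have hcase : 2 ^ k % 7 = 2 ∨ 2 ^ k % 7 = 4 := by
      have : k % 3 = 1 ∨ k % 3 = 2 := by omega
      rcases this with h | h <;> simp [h8, h]
    apply Nat.dvd_of_mod_eq_zero
    rcases hcase with h | h <;> simp [Nat.add_mod, Nat.pow_mod, h]
  obtain ⟨M, hM⟩ := hmod
  refine ⟨M, ?_⟩
  obtain ⟨a, ha⟩ : ∃ a, 2 ^ k = a + 1 := ⟨2 ^ k - 1, by have := Nat.two_pow_pos k; omega⟩
  rw [mul_comm 3 k, pow_mul]
  rw [ha] at hM ⊢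
  rw [Nat.add_sub_cancel, mul_left_comm, ← hM]
  ring

/-- If every nonzero element of a finite field is a power of `u`, then `u ^ E = 1` forces
`E` to be a multiple of the order of the multiplicative group. -/
theorem card_units_dvd_of_pow_eq_one {F : Type*} [Field F] [Finite F] {u : F}
    (hu : ∀ x : F, x ≠ 0 → ∃ m : ℕ, x = u ^ m) {E : ℕ} (hE : u ^ E = 1) :
    Nat.card Fˣ ∣ E := by
  obtain ⟨g, hg⟩ := IsCyclic.exists_ofOrder_eq_natCard (α := Fˣ)
  rw [← hg]
  apply orderOf_dvd_of_pow_eq_one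
  obtain ⟨m, hm⟩ := hu g g.ne_zero
  ext
  rw [Units.val_pow_eq_pow_val, hm, ← pow_mul, mul_comm, pow_mul, hE, one_pow, Units.val_one]

/-- The coefficient `C = w u^{2^k+1} q^{2^{k+s}+2^s} + u q^{2^s+1}` never vanishes
for nonzero `q`. -/
theorem coefficient_C_ne_zero (s k : ℕ) (hs : 0 < s) (hk : 0 < k)
    (h3 : 3 ∣ (k + s)) (hsk : Nat.gcd s (3 * k) = 1) (hk3 : Nat.gcd k 3 = 1)
    (u w : GaloisField 2 (3 * k))
    (hu : ∀ x : GaloisField 2 (3 * k), x ≠ 0 → ∃ m : ℕ, x = u ^ m)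
    (hw : w ^ (2 ^ k) = w) :
    ∀ q : GaloisField 2 (3 * k), q ≠ 0 →
      w * u ^ (2 ^ k + 1) * q ^ (2 ^ (k + s) + 2 ^ s) + u * q ^ (2 ^ s + 1) ≠ 0 := by
  intro q hq hC
  obtain ⟨M, hM⟩ := exists_two_pow_three_mul_eq k hk3
  set E := (2 ^ k - 1) * M with hEdef
  have hcard : Nat.card (GaloisField 2 (3 * k))ˣ = 7 * E := by
    rw [Nat.card_units, GaloisField.card 2 (3 * k) (by omega), hM, Nat.add_sub_cancel]
  have hEpos : 0 < E := by
    have : 2 ^ (3 * k) ≠ 1 := (Nat.one_lt_two_pow (by omega)).ne'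
    omega
  have hpow : ∀ x : GaloisField 2 (3 * k), x ≠ 0 → x ^ (7 * E) = 1 := fun x hx => by
    have h := congrArg Units.val (pow_card_eq_one' (x := Units.mk0 x hx))
    rwa [hcard, Units.val_pow_eq_pow_val, Units.val_mk0, Units.val_one] at h
  have hu0 : u ≠ 0 := by
    rintro rfl
    have hone : Nat.card (GaloisField 2 (3 * k))ˣ = 1 := by
      rw [Nat.card_eq_one_iff_unique]
      refine ⟨⟨fun a b => ?_⟩, ⟨1⟩⟩
      have key : ∀ c : (GaloisField 2 (3 * k))ˣ, c = 1 := fun c => by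
        obtain ⟨m, hm⟩ := hu c c.ne_zero
        rcases Nat.eq_zero_or_pos m with rfl | h
        · ext; simpa using hm
        · rw [zero_pow h.ne'] at hm; exact absurd hm c.ne_zero
      rw [key a, key b]
    omega
  obtain ⟨t, ht⟩ : ∃ t, 2 ^ (k + s) = 7 * t + 1 := by
    obtain ⟨r, hr⟩ := h3
    have h7 : 7 ∣ 8 ^ r - 1 := by simpa using Nat.sub_dvd_pow_sub_pow 8 1 r
    obtain ⟨t, ht⟩ := h7
    refine ⟨t, ?_⟩
    rw [hr, pow_mul]
    have : 0 < 8 ^ r := by positivity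
    norm_num
    omega
  have hprod : w * u ^ (2 ^ k) * q ^ (7 * t) = 1 := by
    have h := CharTwo.add_eq_zero.mp hC
    apply mul_right_cancel₀ (mul_ne_zero hu0 (pow_ne_zero (2 ^ s + 1) hq))
    rw [one_mul]
    refine Eq.trans ?_ h
    rw [ht]
    ring
  have hw0 : w ≠ 0 := by
    rintro rfl
    simp at hprod
  have hwE : w ^ E = 1 := by
    have h1 : w ^ (2 ^ k - 1) = 1 := by
      apply mul_right_cancel₀ hw0
      rw [one_mul, ← pow_succ, Nat.sub_add_cancel Nat.one_le_two_pow, hw]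
    rw [hEdef, pow_mul, h1, one_pow]
  have huE : u ^ E = 1 := by
    have h := congrArg (· ^ E) hprod
    have hqE : (q ^ (7 * t)) ^ E = 1 := by
      rw [← pow_mul, mul_right_comm, pow_mul, hpow q hq, one_pow]
    simp only [mul_pow, hwE, hqE, one_pow, one_mul, mul_one] at h
    rw [pow_right_comm] at h
    apply iterateFrobenius_inj (GaloisField 2 (3 * k)) 2 k
    simpa [iterateFrobenius_def] using h
  have hdvd := card_units_dvd_of_pow_eq_one hu huE
  have := Nat.le_of_dvd hEpos (hcard ▸ hdvd)
  omega
end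

section
/- Let k be a positive integer and let θ be an element of GF(2^{3k}) that is a (2^k − 1)-th power of a nonzero element, i.e., θ = c^{2^k−1} for some nonzero c in GF(2^{3k}). Then for every x in GF(2^{3k}), setting T = θ·x + x^{2^{2k}}, one has T + θ·T^{2^k} + θ^{2^k+1}·T^{2^{2k}} = 0. -/
/-- In `GF(2^{3k})`, the `2^k`-power map composed with itself three times is the identity. -/
theorem GaloisField.pow_two_pow_iterate_three {k : ℕ} (hk : 0 < k)
    (x : GaloisField 2 (3 * k)) : ((x ^ 2 ^ k) ^ 2 ^ k) ^ 2 ^ k = x := by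
  have : Fintype (GaloisField 2 (3 * k)) := Fintype.ofFinite _
  have hcard : Fintype.card (GaloisField 2 (3 * k)) = 2 ^ (3 * k) := by
    rw [← Nat.card_eq_fintype_card, GaloisField.card 2 (3 * k) (by lia)]
  have h := FiniteField.pow_card x
  rw [hcard] at h
  rw [← pow_mul, ← pow_mul, ← pow_add, ← pow_add]
  convert h using 3
  ring

/-- A nonzero `(2^k − 1)`-th power in `GF(2^{3k})` has relative norm `1` over `GF(2^k)`. -/
theorem GaloisField.mul_pow_mul_pow_eq_one {k : ℕ} (hk : 0 < k)
    {θ c : GaloisField 2 (3 * k)} (hc : c ≠ 0) (hθ : θ = c ^ (2 ^ k - 1)) :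
    θ * θ ^ 2 ^ k * (θ ^ 2 ^ k) ^ 2 ^ k = 1 := by
  have h₁ : θ * c = c ^ 2 ^ k := by
    rw [hθ, ← pow_succ, Nat.sub_add_cancel Nat.one_le_two_pow]
  have h₂ : θ ^ 2 ^ k * c ^ 2 ^ k = (c ^ 2 ^ k) ^ 2 ^ k := by rw [← mul_pow, h₁]
  have h₃ : (θ ^ 2 ^ k) ^ 2 ^ k * (c ^ 2 ^ k) ^ 2 ^ k = c := by
    rw [← mul_pow, h₂, GaloisField.pow_two_pow_iterate_three hk]
  apply mul_right_cancel₀ hc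
  linear_combination θ ^ 2 ^ k * (θ ^ 2 ^ k) ^ 2 ^ k * h₁ + (θ ^ 2 ^ k) ^ 2 ^ k * h₂ + h₃

/-- If `θ` is a `(2^k − 1)`-th power of a nonzero element of `GF(2^{3k})`, then for
every `x`, putting `T = θ x + x^{2^{2k}}`, the linearized polynomial
`L_θ(T) = T + θ T^{2^k} + θ^{2^k+1} T^{2^{2k}}` vanishes. -/
theorem linearized_poly_vanishes (k : ℕ) (hk : 0 < k)
    (θ c : GaloisField 2 (3 * k)) (hc : c ≠ 0) (hθ : θ = c ^ (2 ^ k - 1)) :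
    ∀ x : GaloisField 2 (3 * k),
      (θ * x + x ^ (2 ^ (2 * k)))
        + θ * (θ * x + x ^ (2 ^ (2 * k))) ^ (2 ^ k)
        + θ ^ (2 ^ k + 1) * (θ * x + x ^ (2 ^ (2 * k))) ^ (2 ^ (2 * k)) = 0 := by
  intro x
  have hsq (y : GaloisField 2 (3 * k)) : y ^ 2 ^ (2 * k) = (y ^ 2 ^ k) ^ 2 ^ k := by
    rw [← pow_mul, ← pow_add, two_mul]
  have hnorm := GaloisField.mul_pow_mul_pow_eq_one hk hc hθ
  have htwo : (2 : GaloisField 2 (3 * k)) = 0 := CharTwo.two_eq_zero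
  simp only [hsq, add_pow_char_pow, mul_pow, pow_succ θ,
    GaloisField.pow_two_pow_iterate_three hk]
  linear_combination (x ^ 2 ^ k) ^ 2 ^ k * hnorm
    + (θ * x + θ * θ ^ 2 ^ k * x ^ 2 ^ k + (x ^ 2 ^ k) ^ 2 ^ k) * htwo
end

section
/- Let s and k be positive integers with k+s divisible by 3, gcd(s,3k)=1 and gcd(k,3)=1, let u be a primitive element of GF(2^{3k}), and let v be an element of the subfield GF(2^k). For a nonzero q in GF(2^{3k}), set A = v·q^{2^{2k}+1} + u·q^{2^s+1} and B = v·q^{2^{2k}+1} + u^{2^k}·q^{2^{2k}+2^{k+s}}. Then A/B is a (2^k − 1)-th power in GF(2^{3k}): there exists a nonzero c in GF(2^{3k}) with A = c^{2^k−1}·B. -/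
/-- If `r ^ n = q` and `n`-th powers turn `X` into `Y`, then `q * X` and `r * Y` differ by
an `(n - 1)`-th power of a nonzero element. -/
theorem exists_pow_sub_one_mul_eq {F : Type*} [Field F] {n : ℕ} (hn : 0 < n) {q r X Y : F}
    (hr : r ≠ 0) (hrq : r ^ n = q) (hXY : X ^ n = Y) :
    ∃ c : F, c ≠ 0 ∧ q * X = c ^ (n - 1) * (r * Y) := by
  obtain ⟨m, rfl⟩ : ∃ m, n = m + 1 := ⟨n - 1, by lia⟩
  subst hrq hXY
  rcases eq_or_ne X 0 with rfl | hX
  · exact ⟨1, one_ne_zero, by simp⟩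
  · refine ⟨r / X, div_ne_zero hr hX, ?_⟩
    rw [Nat.add_sub_cancel, div_pow]
    field_simp
    ring

/-- The ratio `A/B` of the coefficients `A = v q^{2^{2k}+1} + u q^{2^s+1}` and
`B = v q^{2^{2k}+1} + u^{2^k} q^{2^{2k}+2^{k+s}}` is a `(2^k − 1)`-th power. -/
theorem A_div_B_is_power (s k : ℕ) (hs : 0 < s) (hk : 0 < k)
    (h3 : 3 ∣ (k + s)) (hsk : Nat.gcd s (3 * k) = 1) (hk3 : Nat.gcd k 3 = 1)
    (u v : GaloisField 2 (3 * k))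
    (hu : ∀ x : GaloisField 2 (3 * k), x ≠ 0 → ∃ m : ℕ, x = u ^ m)
    (hv : v ^ (2 ^ k) = v)
    (q : GaloisField 2 (3 * k)) (hq : q ≠ 0) :
    ∃ c : GaloisField 2 (3 * k), c ≠ 0 ∧
      v * q ^ (2 ^ (2 * k) + 1) + u * q ^ (2 ^ s + 1)
        = c ^ (2 ^ k - 1)
          * (v * q ^ (2 ^ (2 * k) + 1) + u ^ (2 ^ k) * q ^ (2 ^ (2 * k) + 2 ^ (k + s))) := by
  have hrq : (q ^ 2 ^ (2 * k)) ^ 2 ^ k = q := by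
    have := Fintype.ofFinite (GaloisField 2 (3 * k))
    have hcard : Fintype.card (GaloisField 2 (3 * k)) = 2 ^ (3 * k) := by
      rw [← Nat.card_eq_fintype_card, GaloisField.card 2 (3 * k) (by lia)]
    rw [← pow_mul, ← pow_add, show 2 * k + k = 3 * k by ring, ← hcard, FiniteField.pow_card]
  have hXY : (v * q ^ 2 ^ (2 * k) + u * q ^ 2 ^ s) ^ 2 ^ k
      = v * q + u ^ 2 ^ k * q ^ 2 ^ (k + s) := by
    rw [add_pow_char_pow, mul_pow, mul_pow, hv, hrq, ← pow_mul, ← pow_add, add_comm s k]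
  obtain ⟨c, hc, h⟩ :=
    exists_pow_sub_one_mul_eq (pow_pos two_pos k) (pow_ne_zero _ hq) hrq hXY
  refine ⟨c, hc, ?_⟩
  linear_combination h
end

section
/- Let s and k be positive integers with k+s divisible by 3, gcd(s,3k)=1 and gcd(k,3)=1, and let u be a primitive element of GF(2^{3k}). Then for every nonzero q in GF(2^{3k}), the element a in GF(2^{3k}) determined by a·q^{2^s+1} = u^{2^k−1}·q^{2^{2k}+2^{k+s}} is not a seventh power in GF(2^{3k}); that is, there is no c in GF(2^{3k}) with c^7 = a. -/
/-- A generator `u` of the multiplicative group of `GF(2^n)`, with `2 ≤ n`, is nonzero. -/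
theorem GaloisField.generator_ne_zero {n : ℕ} (hn : 2 ≤ n) {u : GaloisField 2 n}
    (hu : ∀ x : GaloisField 2 n, x ≠ 0 → ∃ m : ℕ, x = u ^ m) : u ≠ 0 := by
  rintro rfl
  have hone : ∀ x : (GaloisField 2 n)ˣ, x = 1 := by
    intro x
    obtain ⟨m, hm⟩ := hu x x.ne_zero
    rcases Nat.eq_zero_or_pos m with rfl | hpos
    · exact Units.ext (by simpa using hm)
    · simp [hpos.ne'] at hm
  have hsub : Subsingleton (GaloisField 2 n)ˣ := ⟨fun x y => (hone x).trans (hone y).symm⟩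
  have hcard := Nat.card_units (GaloisField 2 n)
  rw [GaloisField.card 2 n (by omega), Nat.card_of_subsingleton 1] at hcard
  have : 2 ^ 2 ≤ 2 ^ n := Nat.pow_le_pow_right (by norm_num) hn
  omega

/-- A generator of the multiplicative group of `GF(2^n)` has order `2^n - 1`. -/
theorem GaloisField.orderOf_generator {n : ℕ} (hn : 2 ≤ n) {u : GaloisField 2 n}
    (hu : ∀ x : GaloisField 2 n, x ≠ 0 → ∃ m : ℕ, x = u ^ m) : orderOf u = 2 ^ n - 1 := by
  have hu0 := GaloisField.generator_ne_zero hn hu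
  have hgen : ∀ x : (GaloisField 2 n)ˣ, x ∈ Subgroup.zpowers (Units.mk0 u hu0) := by
    intro x
    obtain ⟨m, hm⟩ := hu x x.ne_zero
    exact ⟨m, Units.ext (by simp [hm])⟩
  have hord := orderOf_eq_card_of_forall_mem_zpowers hgen
  rwa [Nat.card_units, GaloisField.card 2 n (by omega), ← orderOf_units, Units.val_mk0] at hord

/-- For nonzero `q`, the element `a` with `a q^{2^s+1} = u^{2^k−1} q^{2^{2k}+2^{k+s}}`
(i.e. `a = u^{2^k−1} q^{2^{2k}+2^{k+s}−2^s−1}`) is not a seventh power in `GF(2^{3k})`. -/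
theorem a_not_seventh_power (s k : ℕ) (hs : 0 < s) (hk : 0 < k)
    (h3 : 3 ∣ (k + s)) (hsk : Nat.gcd s (3 * k) = 1) (hk3 : Nat.gcd k 3 = 1)
    (u : GaloisField 2 (3 * k))
    (hu : ∀ x : GaloisField 2 (3 * k), x ≠ 0 → ∃ m : ℕ, x = u ^ m) :
    ∀ q : GaloisField 2 (3 * k), q ≠ 0 →
      ∀ a : GaloisField 2 (3 * k),
        a * q ^ (2 ^ s + 1) = u ^ (2 ^ k - 1) * q ^ (2 ^ (2 * k) + 2 ^ (k + s)) →
        ¬ ∃ c : GaloisField 2 (3 * k), c ^ 7 = a := by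
  rintro q hq _ heq ⟨c, rfl⟩
  have hu0 : u ≠ 0 := GaloisField.generator_ne_zero (by omega) hu
  have hord : orderOf u = 2 ^ (3 * k) - 1 := GaloisField.orderOf_generator (by omega) hu
  have hc : c ≠ 0 := by
    rintro rfl
    rw [zero_pow (by norm_num), zero_mul] at heq
    exact mul_ne_zero (pow_ne_zero _ hu0) (pow_ne_zero _ hq) heq.symm
  obtain ⟨m, rfl⟩ := hu q hq
  obtain ⟨n, rfl⟩ := hu c hc
  simp only [← pow_mul, ← pow_add] at heq
  have hdvd : 7 ∣ orderOf u := by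
    rw [hord, pow_mul]
    simpa using Nat.sub_dvd_pow_sub_pow 8 1 k
  have hmod : n * 7 + m * (2 ^ s + 1) ≡ 2 ^ k - 1 + m * (2 ^ (2 * k) + 2 ^ (k + s)) [MOD 7] := by
    have hunit : Units.mk0 u hu0 ^ (n * 7 + m * (2 ^ s + 1)) =
        Units.mk0 u hu0 ^ (2 ^ k - 1 + m * (2 ^ (2 * k) + 2 ^ (k + s))) :=
      Units.ext (by simpa using heq)
    refine (pow_eq_pow_iff_modEq.mp hunit).of_dvd ?_
    rwa [← orderOf_units, Units.val_mk0]
  have hexp : m * (2 ^ (2 * k) + 2 ^ (k + s)) ≡ m * (2 ^ s + 1) [MOD 7] := by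
    refine Nat.ModEq.mul_left m (Nat.ModEq.add ?_ ?_)
    · have h := two_pow_modEq_seven (2 * k)
      rw [show 2 * k % 3 = s % 3 by omega] at h
      exact h.trans (two_pow_modEq_seven s).symm
    · have h := two_pow_modEq_seven (k + s)
      rwa [Nat.mod_eq_zero_of_dvd h3, pow_zero] at h
  have hfirst : n * 7 ≡ 2 ^ k - 1 [MOD 7] := Nat.ModEq.add_right_cancel hexp.symm hmod
  have hpow := two_pow_modEq_seven k
  have hpos : 0 < 2 ^ k := by positivity
  have hk0 : k % 3 ≠ 0 := by
    intro h
    rw [Nat.gcd_eq_right (Nat.dvd_of_mod_eq_zero h)] at hk3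
    omega
  unfold Nat.ModEq at hfirst hpow
  rcases (by omega : k % 3 = 1 ∨ k % 3 = 2) with h | h <;> rw [h] at hpow <;> omega
end

section
/- Let s and k be positive integers with k+s divisible by 3, gcd(s,3k)=1 and gcd(k,3)=1, and let u be a primitive element of GF(2^{3k}). Then for every nonzero q in GF(2^{3k}), u·q^{2^s+1} + u^{2^k}·q^{2^{2k}+2^{k+s}} ≠ 0. -/
/-- In a finite field with more than two elements, an element whose powers exhaust the nonzero
elements has multiplicative order `Nat.card F - 1`. -/
theorem orderOf_eq_card_sub_one_of_forall_eq_pow {F : Type*} [Field F] [Finite F]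
    (hF : 2 < Nat.card F) {u : F} (hu : ∀ x : F, x ≠ 0 → ∃ m : ℕ, x = u ^ m) :
    orderOf u = Nat.card F - 1 := by
  have hcard : Nat.card Fˣ = Nat.card F - 1 := Nat.card_units F
  have hu0 : u ≠ 0 := by
    rintro rfl
    have : Nontrivial Fˣ := Finite.one_lt_card_iff_nontrivial.mp (by omega)
    obtain ⟨x, hx⟩ := exists_ne (1 : Fˣ)
    obtain ⟨m, hm⟩ := hu x x.ne_zero
    rcases Nat.eq_zero_or_pos m with rfl | hpos
    · exact hx (Units.ext (by simpa using hm))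
    · exact x.ne_zero (by rw [hm, zero_pow hpos.ne'])
  lift u to Fˣ using hu0.isUnit
  rw [orderOf_units, ← hcard]
  refine orderOf_eq_card_of_forall_mem_zpowers fun x => ?_
  obtain ⟨m, hm⟩ := hu x x.ne_zero
  exact ⟨m, Units.ext (by simp [hm])⟩

/-- Powers of `2` modulo `7` depend only on the exponent modulo `3`. -/
theorem two_pow_modEq_seven_s15 {a b : ℕ} (h : a ≡ b [MOD 3]) : 2 ^ a ≡ 2 ^ b [MOD 7] := by
  have key (n : ℕ) : 2 ^ n ≡ 2 ^ (n % 3) [MOD 7] := by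
    conv_lhs => rw [← Nat.div_add_mod n 3, pow_add, pow_mul]
    simpa using ((show 2 ^ 3 ≡ 1 [MOD 7] by decide).pow (n / 3)).mul_right (2 ^ (n % 3))
  have hab : a % 3 = b % 3 := h
  exact (key a).trans (hab ▸ (key b).symm)

/-- For every nonzero `q`, `u q^{2^s+1} + u^{2^k} q^{2^{2k}+2^{k+s}} ≠ 0`. -/
theorem sum_ne_zero (s k : ℕ) (hs : 0 < s) (hk : 0 < k)
    (h3 : 3 ∣ (k + s)) (hsk : Nat.gcd s (3 * k) = 1) (hk3 : Nat.gcd k 3 = 1)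
    (u : GaloisField 2 (3 * k))
    (hu : ∀ x : GaloisField 2 (3 * k), x ≠ 0 → ∃ m : ℕ, x = u ^ m) :
    ∀ q : GaloisField 2 (3 * k), q ≠ 0 →
      u * q ^ (2 ^ s + 1) + u ^ (2 ^ k) * q ^ (2 ^ (2 * k) + 2 ^ (k + s)) ≠ 0 := by
  intro q hq hsum
  have hcard : Nat.card (GaloisField 2 (3 * k)) = 2 ^ (3 * k) :=
    GaloisField.card 2 (3 * k) (by omega)
  have hlt : 2 < 2 ^ (3 * k) := by
    calc 2 < 2 ^ 3 := by norm_num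
      _ ≤ 2 ^ (3 * k) := Nat.pow_le_pow_right (by norm_num) (by omega)
  have hord : orderOf u = 2 ^ (3 * k) - 1 := by
    rw [orderOf_eq_card_sub_one_of_forall_eq_pow (hcard ▸ hlt) hu, hcard]
  have h7 : 7 ∣ orderOf u := by
    rw [hord]
    exact (Nat.modEq_iff_dvd' (by omega)).mp
      (two_pow_modEq_seven_s15 (a := 0) (b := 3 * k) (by simp [Nat.ModEq]))
  obtain ⟨m, rfl⟩ := hu q hq
  have hne : u ≠ 0 := by
    rintro rfl
    simp at hord
    omega
  have heq := CharTwo.add_eq_zero.mp hsum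
  rw [← pow_mul, ← pow_mul, ← pow_succ', ← pow_add] at heq
  have hmod : m * (2 ^ s + 1) + 1 ≡ 2 ^ k + m * (2 ^ (2 * k) + 2 ^ (k + s)) [MOD 7] :=
    ((pow_eq_pow_iff_modEq (x := Units.mk0 u hne)).mp (Units.ext (by simpa using heq))).of_dvd
      (by rwa [← orderOf_units, Units.val_mk0])
  have hm : m * (2 ^ s + 1) ≡ m * (2 ^ (2 * k) + 2 ^ (k + s)) [MOD 7] :=
    ((two_pow_modEq_seven_s15 (by unfold Nat.ModEq; omega)).add
      (two_pow_modEq_seven_s15 (a := 0) (by unfold Nat.ModEq; omega))).mul_left m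
  rw [add_comm] at hmod
  have hk1 : 1 ≡ 2 ^ k [MOD 7] := hm.add_right_cancel hmod
  have hk0 : k % 3 ≠ 0 := fun h => by
    rw [Nat.gcd_eq_right (Nat.dvd_of_mod_eq_zero h)] at hk3
    omega
  have hcases : k % 3 = 1 ∨ k % 3 = 2 := by omega
  rcases hcases with h | h
  · exact absurd (hk1.trans (two_pow_modEq_seven_s15 (b := 1) h)) (by decide)
  · exact absurd (hk1.trans (two_pow_modEq_seven_s15 (b := 2) h)) (by decide)
end
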